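/- Fix α > 0 and let u : Σ → ℝ be a continuous function satisfying u(y) = max_{a∈{0,1,2}} (A_α(a·y) + u(a·y)) for every y ∈ Σ (i.e., u is a calibrated subaction for A_α). Then for every x ∈ Σ, u(x) = max( u(0^∞) − d(x,0^∞), u(1^∞) − 3·d(x,1^∞) ). -/

import Mathlib

/-!
Write `p_a = a^∞`. Two facts about the distance carry the proof: `d(a·x, p_a) = d(x, p_a) / 2`,
and `d(b·x, p_a) = 1` for `b ≠ a`. With `c = 1` for `a = 0` and `c = 3` for `a = 1`, they give
`A(a·x) - c d(a·x, p_a) = -c d(x, p_a)`.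

*Lower bound.* By calibration, `W = u + c d(·, p_a)` does not increase under `x ↦ a·x`.
As `a^n·x → p_a`, continuity gives `u(p_a) ≤ W(x)` (`le_of_prepend`).

*Upper bound.* Let `V` be the right-hand side of the formula. Then `A(b·x) + V(b·x) ≤ V(x)` for
every symbol `b` (`pot_add_le`), so `u - V` does not decrease along a calibrated backward orbit
`x_{n+1} = b_n·x_n`, `u(x_n) = A(x_{n+1}) + u(x_{n+1})`. As `u` is bounded, `A(x_n)` cannot stay
away from `0`, so the orbit comes arbitrarily close to `{0^∞, 1^∞}`, where `u - V` is at most any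
prescribed `ε > 0` by continuity of `u`. Hence `u - V ≤ 0` at the starting point.
-/

open MeasureTheory Filter Topology

noncomputable section

/-- The full shift space `Σ = {0,1,2}^ℕ`. -/
abbrev Sig : Type := ℕ → Fin 3

/-- The shift map `σ`. -/
def shift (x : Sig) : Sig := fun n => x (n + 1)

/-- The fixed point `0^∞`. -/
def zeroSeq : Sig := fun _ => 0

/-- The fixed point `1^∞`. -/
def oneSeq : Sig := fun _ => 1

/-- Prepending a symbol: `a·x = (a, x₀, x₁, …)`. -/
def cons (a : Fin 3) (x : Sig) : Sig := fun n => Nat.casesOn n a x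

open Classical in
/-- The metric `d(x,y) = (1/2)^(min{n : x n ≠ y n})`, with `d(x,x) = 0`. -/
def dist3 (x y : Sig) : ℝ :=
  if h : x ≠ y then (1 / 2 : ℝ) ^ Nat.find (Function.ne_iff.mp h) else 0

/-- The potential `A_α`. -/
def pot (α : ℝ) (x : Sig) : ℝ :=
  if x 0 = 0 then -dist3 x zeroSeq
  else if x 0 = 1 then -(3 * dist3 x oneSeq)
  else -α

/-- The transfer operator `L_β` (for parameter `α`). -/
def transfer (α β : ℝ) (f : Sig → ℝ) : Sig → ℝ :=
  fun x => ∑ a : Fin 3, Real.exp (β * pot α (cons a x)) * f (cons a x)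

/-- The ring `[a^n *_a] = {x : x_i = a for i < n, x_n ≠ a}`. -/
def ringSet (a : Fin 3) (n : ℕ) : Set Sig := {x | (∀ i < n, x i = a) ∧ x n ≠ a}

/-- The cylinder `[a] = {x : x₀ = a}`. -/
def cyl (a : Fin 3) : Set Sig := {x | x 0 = a}

/-- `H` is locally ring-constant: constant on `[2]` and on each ring `[0^m*₀]`, `[1^m*₁]`. -/
def LocallyRingConstant (H : Sig → ℝ) : Prop :=
  (∀ x ∈ cyl 2, ∀ y ∈ cyl 2, H x = H y) ∧
  (∀ m : ℕ, 1 ≤ m → ∀ x ∈ ringSet 0 m, ∀ y ∈ ringSet 0 m, H x = H y) ∧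
  (∀ m : ℕ, 1 ≤ m → ∀ x ∈ ringSet 1 m, ∀ y ∈ ringSet 1 m, H x = H y)

/-- An eigen-measure for `(α,β)` with exponent `P`:  a Borel probability measure `ν`
with `P > 0` and `∫ L_β f dν = e^P ∫ f dν` for every continuous `f`. -/
structure IsEigenMeasure (α β P : ℝ) (ν : Measure Sig) : Prop where
  P_pos : 0 < P
  prob : IsProbabilityMeasure ν
  eigenMeas : ∀ f : Sig → ℝ, Continuous f →
    ∫ x, transfer α β f x ∂ν = Real.exp P * ∫ x, f x ∂ν

/-- Eigen-data `(P, H, ν)` for `(α,β)`. -/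
structure IsEigenData (α β P : ℝ) (H : Sig → ℝ) (ν : Measure Sig) : Prop where
  P_pos : 0 < P
  H_cont : Continuous H
  H_pos : ∀ x, 0 < H x
  eigenFun : ∀ x, transfer α β H x = Real.exp P * H x
  prob : IsProbabilityMeasure ν
  eigenMeas : ∀ f : Sig → ℝ, Continuous f →
    ∫ x, transfer α β f x ∂ν = Real.exp P * ∫ x, f x ∂ν

/-- The Gibbs measure `μ(B) = (∫_B H dν)/(∫ H dν)`. -/
def gibbs (H : Sig → ℝ) (ν : Measure Sig) : Measure Sig :=
  (ν.withDensity (fun x => ENNReal.ofReal (H x)) Set.univ)⁻¹ •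
    ν.withDensity (fun x => ENNReal.ofReal (H x))

/-- Weak convergence (as `β → +∞`) of a family of measures to a measure `μ∞`:
convergence of integrals of every bounded continuous function. -/
def WeakLimit (μ : ℝ → Measure Sig) (μlim : Measure Sig) : Prop :=
  ∀ f : Sig → ℝ, Continuous f → (∃ C : ℝ, ∀ x, |f x| ≤ C) →
    Tendsto (fun β => ∫ x, f x ∂(μ β)) atTop (nhds (∫ x, f x ∂μlim))

/-- `F(Z,β) = Σ_{k=0}^∞ e^{−kZ}·e^{β/2^{k+1}}`. -/
def Ffun (Z β : ℝ) : ℝ := ∑' k : ℕ, Real.exp (-(k : ℝ) * Z) * Real.exp (β / 2 ^ (k + 1))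

/-- `Fpartial Z β m = F_{m-1}(Z,β) = Σ_{k=0}^{m-1} e^{−kZ}·e^{β/2^{k+1}}` (so `Fpartial Z β 0 = F_{-1} = 0`). -/
def Fpartial (Z β : ℝ) (m : ℕ) : ℝ :=
  ∑ k ∈ Finset.range m, Real.exp (-(k : ℝ) * Z) * Real.exp (β / 2 ^ (k + 1))

lemma dist3_nonneg (x y : Sig) : 0 ≤ dist3 x y := by
  unfold dist3; split_ifs <;> positivity

lemma dist3_le_one (x y : Sig) : dist3 x y ≤ 1 := by
  unfold dist3; split_ifs
  · exact pow_le_one₀ (by norm_num) (by norm_num)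
  · norm_num

lemma dist3_eq_one {x y : Sig} (h : x 0 ≠ y 0) : dist3 x y = 1 := by
  have hne : x ≠ y := fun e => h (by rw [e])
  unfold dist3
  rw [dif_pos hne, (Nat.find_eq_zero _).2 h, pow_zero]

lemma half_pow_le_dist3 {x y : Sig} {n : ℕ} (h : x n ≠ y n) : (1 / 2 : ℝ) ^ n ≤ dist3 x y := by
  have hne : x ≠ y := fun e => h (by rw [e])
  unfold dist3
  rw [dif_pos hne]
  exact pow_le_pow_of_le_one (by norm_num) (by norm_num) (Nat.find_min' _ h)

lemma dist3_cons_same (a : Fin 3) (x : Sig) :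
    dist3 (cons a x) (fun _ => a) = dist3 x (fun _ => a) / 2 := by
  by_cases h : x = fun _ => a
  · have h' : cons a x = fun _ => a := by
      funext n
      cases n with
      | zero => rfl
      | succ n => exact congrFun h n
    rw [h', h]
    simp [dist3]
  · have h' : cons a x ≠ fun _ => a := fun e => h (funext fun n => congrFun e (n + 1))
    unfold dist3
    rw [dif_pos h, dif_pos h', div_eq_mul_one_div (_ ^ _), ← pow_succ]
    congr 1
    rw [Nat.find_eq_iff]
    refine ⟨Nat.find_spec (Function.ne_iff.mp h), fun n hn => ?_⟩
    cases n with
    | zero => exact not_not.2 rfl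
    | succ n => exact Nat.find_min (Function.ne_iff.mp h) (Nat.lt_of_succ_lt_succ hn)

lemma dist3_cons_ne {a b : Fin 3} (h : b ≠ a) (x : Sig) : dist3 (cons b x) (fun _ => a) = 1 :=
  dist3_eq_one h

/-- Convergence in the metric `d` implies convergence in the product topology. -/
lemma comap_dist3_le_nhds (p : Sig) : comap (fun x => dist3 x p) (𝓝 0) ≤ 𝓝 p := by
  rw [← tendsto_id']
  refine tendsto_pi_nhds.2 fun n => ?_
  have hev : ∀ᶠ x in comap (fun x => dist3 x p) (𝓝 0), dist3 x p < (1 / 2 : ℝ) ^ n :=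
    tendsto_comap.eventually (gt_mem_nhds (by positivity))
  refine tendsto_nhds_of_eventually_eq (hev.mono fun x hx => ?_)
  by_contra hne
  exact absurd (half_pow_le_dist3 hne) (not_le.2 hx)

lemma exists_delta {u : Sig → ℝ} (hu : Continuous u) (p : Sig) {ε : ℝ} (hε : 0 < ε) :
    ∃ δ > 0, ∀ x, dist3 x p < δ → u x < u p + ε := by
  have h : ∀ᶠ x in comap (fun x => dist3 x p) (𝓝 0), u x < u p + ε :=
    comap_dist3_le_nhds p (hu.continuousAt.eventually (gt_mem_nhds (by linarith)))
  obtain ⟨s, hs, hsub⟩ := h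
  obtain ⟨δ, hδ, hball⟩ := Metric.mem_nhds_iff.1 hs
  refine ⟨δ, hδ, fun x hx => hsub (hball ?_)⟩
  rw [Metric.mem_ball, Real.dist_eq, sub_zero, abs_of_nonneg (dist3_nonneg _ _)]
  exact hx

/-- If prepending `a` costs at most `c d(a·y, a^∞)`, then reaching `y` from `a^∞` costs at most
`c d(y, a^∞)`. -/
lemma le_of_prepend {u : Sig → ℝ} (hu : Continuous u) (a : Fin 3) (c : ℝ)
    (h : ∀ y, u (cons a y) - c * dist3 (cons a y) (fun _ => a) ≤ u y) (x : Sig) :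
    u (fun _ => a) - c * dist3 x (fun _ => a) ≤ u x := by
  set p : Sig := fun _ => a with hp
  have hdist : ∀ n, dist3 ((cons a)^[n] x) p = dist3 x p * (1 / 2) ^ n := by
    intro n
    induction n with
    | zero => simp
    | succ n ih =>
      rw [Function.iterate_succ_apply', hp, dist3_cons_same, ← hp, ih, pow_succ]
      ring
  have hmono : ∀ n, u ((cons a)^[n] x) + c * dist3 ((cons a)^[n] x) p
      ≤ u x + c * dist3 x p := by
    intro n
    induction n with
    | zero => simp
    | succ n ih =>
      have h1 := h ((cons a)^[n] x)
      have h2 := dist3_cons_same a ((cons a)^[n] x)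
      rw [← hp] at h2
      rw [Function.iterate_succ_apply']
      rw [h2] at h1 ⊢
      linarith
  have hd : Tendsto (fun n => dist3 ((cons a)^[n] x) p) atTop (𝓝 0) := by
    simp_rw [hdist]
    simpa using (tendsto_pow_atTop_nhds_zero_of_lt_one (r := (1 / 2 : ℝ))
      (by norm_num) (by norm_num)).const_mul (dist3 x p)
  have ht : Tendsto (fun n => (cons a)^[n] x) atTop (𝓝 p) :=
    (tendsto_comap_iff.2 hd).mono_right (comap_dist3_le_nhds p)
  have hlim := ((hu.tendsto p).comp ht).add (hd.const_mul c)
  have := le_of_tendsto' hlim hmono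
  linarith

lemma pot_cons_zero (α : ℝ) (x : Sig) : pot α (cons 0 x) = -dist3 (cons 0 x) zeroSeq := by
  simp [pot, cons]

lemma pot_cons_one (α : ℝ) (x : Sig) : pot α (cons 1 x) = -(3 * dist3 (cons 1 x) oneSeq) := by
  simp [pot, cons]

lemma pot_nonpos {α : ℝ} (hα : 0 < α) (x : Sig) : pot α x ≤ 0 := by
  have h0 := dist3_nonneg x zeroSeq
  have h1 := dist3_nonneg x oneSeq
  unfold pot
  split_ifs <;> linarith

/-- The function `max (s - d(·, 0^∞)) (t - 3 d(·, 1^∞))` is a subaction for every `s` and `t`. -/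
lemma pot_add_le {α : ℝ} (hα : 0 < α) (s t : ℝ) (b : Fin 3) (x : Sig) :
    pot α (cons b x) +
        max (s - dist3 (cons b x) zeroSeq) (t - 3 * dist3 (cons b x) oneSeq)
      ≤ max (s - dist3 x zeroSeq) (t - 3 * dist3 x oneSeq) := by
  have hA := pot_nonpos hα (cons b x)
  rw [← max_add_add_left]
  refine max_le_max ?_ ?_
  · by_cases hb : b = 0
    · subst hb
      have := dist3_cons_same 0 x
      rw [pot_cons_zero]
      change dist3 (cons 0 x) zeroSeq = dist3 x zeroSeq / 2 at this
      linarith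
    · have := dist3_cons_ne hb x
      change dist3 (cons b x) zeroSeq = 1 at this
      linarith [dist3_le_one x zeroSeq]
  · by_cases hb : b = 1
    · subst hb
      have := dist3_cons_same 1 x
      rw [pot_cons_one]
      change dist3 (cons 1 x) oneSeq = dist3 x oneSeq / 2 at this
      linarith
    · have := dist3_cons_ne hb x
      change dist3 (cons b x) oneSeq = 1 at this
      linarith [dist3_le_one x oneSeq]

lemma close_of_pot_gt {α δ : ℝ} (hδα : δ ≤ α) {x : Sig} (h : -δ < pot α x) :
    dist3 x zeroSeq < δ ∨ dist3 x oneSeq < δ := by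
  have h1 := dist3_nonneg x oneSeq
  unfold pot at h
  split_ifs at h
  · left; linarith
  · right; linarith
  · linarith

/-- Every calibrated subaction `u` for `A_α` satisfies
`u(x) = max(u(0^∞) − d(x,0^∞), u(1^∞) − 3d(x,1^∞))`. -/
theorem calibrated_subaction_formula (α : ℝ) (hα : 0 < α) (u : Sig → ℝ)
    (hu : Continuous u)
    (hcal : ∀ y : Sig, u y =
      max (pot α (cons 0 y) + u (cons 0 y))
        (max (pot α (cons 1 y) + u (cons 1 y)) (pot α (cons 2 y) + u (cons 2 y)))) :
    ∀ x : Sig, u x = max (u zeroSeq - dist3 x zeroSeq) (u oneSeq - 3 * dist3 x oneSeq) := by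
  intro x
  apply le_antisymm
  · set V : Sig → ℝ := fun z =>
      max (u zeroSeq - dist3 z zeroSeq) (u oneSeq - 3 * dist3 z oneSeq) with hV
    change u x ≤ V x
    have hstep : ∀ y, ∃ b, u y = pot α (cons b y) + u (cons b y) := by
      intro y
      rcases max_choice (pot α (cons 0 y) + u (cons 0 y))
        (max (pot α (cons 1 y) + u (cons 1 y)) (pot α (cons 2 y) + u (cons 2 y))) with h | h
      · exact ⟨0, (hcal y).trans h⟩
      rcases max_choice (pot α (cons 1 y) + u (cons 1 y))
        (pot α (cons 2 y) + u (cons 2 y)) with h' | h'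
      · exact ⟨1, (hcal y).trans (h.trans h')⟩
      · exact ⟨2, (hcal y).trans (h.trans h')⟩
    choose b hb using hstep
    -- The calibrated backward orbit of `x`.
    set X : ℕ → Sig := fun n => (fun y => cons (b y) y)^[n] x with hX
    have hXs : ∀ n, X (n + 1) = cons (b (X n)) (X n) := fun n =>
      Function.iterate_succ_apply' _ _ _
    have hcalX : ∀ n, u (X n) = pot α (X (n + 1)) + u (X (n + 1)) := fun n => by
      rw [hXs]; exact hb _
    have hgap : ∀ n, u x - V x ≤ u (X n) - V (X n) := by
      intro n
      induction n with
      | zero => exact le_rfl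
      | succ n ih =>
        have h1 := pot_add_le hα (u zeroSeq) (u oneSeq) (b (X n)) (X n)
        rw [← hXs] at h1
        change pot α (X (n + 1)) + V (X (n + 1)) ≤ V (X n) at h1
        linarith [hcalX n]
    obtain ⟨B, hB⟩ := (isCompact_range hu).bddAbove
    have hsmall : ∀ δ > 0, ∃ n, -δ < pot α (X n) := by
      intro δ hδ
      by_contra! hcon
      have hgrow : ∀ n : ℕ, u x + n * δ ≤ u (X n) := by
        intro n
        induction n with
        | zero => simp [hX]
        | succ n ih =>
          push_cast
          linarith [hcalX n, hcon (n + 1)]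
      obtain ⟨n, hn⟩ := exists_nat_gt ((B - u x) / δ)
      rw [div_lt_iff₀ hδ] at hn
      linarith [hgrow n, hB (Set.mem_range_self (X n))]
    refine le_of_forall_pos_le_add fun ε hε => ?_
    obtain ⟨δ₀, hδ₀, h0⟩ := exists_delta hu zeroSeq (half_pos hε)
    obtain ⟨δ₁, hδ₁, h1⟩ := exists_delta hu oneSeq (half_pos hε)
    -- The bound `ε / 6` absorbs the slope `3` of `V` near `1^∞`.
    obtain ⟨n, hn⟩ := hsmall (min (min δ₀ δ₁) (min α (ε / 6))) (by positivity)
    have hclose := close_of_pot_gt ((min_le_right _ _).trans (min_le_left _ _)) hn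
    simp only [lt_min_iff] at hclose
    have hg := hgap n
    rcases hclose with ⟨⟨hc, -⟩, -, hc'⟩ | ⟨⟨-, hc⟩, -, hc'⟩
    · have := h0 _ hc
      have : u zeroSeq - dist3 (X n) zeroSeq ≤ V (X n) := le_max_left _ _
      linarith
    · have := h1 _ hc
      have : u oneSeq - 3 * dist3 (X n) oneSeq ≤ V (X n) := le_max_right _ _
      linarith
  · refine max_le ?_ ?_
    · have := le_of_prepend hu 0 1 (fun y => ?_) x
      · rwa [one_mul] at this
      · have h : pot α (cons 0 y) + u (cons 0 y) ≤ u y := by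
          rw [hcal y]; exact le_max_left _ _
        rw [pot_cons_zero] at h
        change u (cons 0 y) - 1 * dist3 (cons 0 y) zeroSeq ≤ u y
        linarith
    · refine le_of_prepend hu 1 3 (fun y => ?_) x
      have h : pot α (cons 1 y) + u (cons 1 y) ≤ u y := by
        rw [hcal y]; exact (le_max_left _ _).trans (le_max_right _ _)
      rw [pot_cons_one] at h
      change u (cons 1 y) - 3 * dist3 (cons 1 y) oneSeq ≤ u y
      linarith

end
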